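/- Let (X,d) be a compact geodesic metric space, m a finite nonzero Borel measure on X, and K ∈ ℝ. Suppose that for every pair of probability measures μ₀, μ₁ on X absolutely continuous with respect to m there exists a probability measure η on X, absolutely continuous with respect to m, which is a W₂-midpoint of μ₀ and μ₁ (i.e. W₂(μ₀,η) = W₂(η,μ₁) = (1/2)·W₂(μ₀,μ₁)) and satisfies Ent(η) ≤ (1/2)·Ent(μ₀) + (1/2)·Ent(μ₁) − (K/8)·W₂(μ₀,μ₁)². Then (X,d,m) satisfies the CD(K,∞) condition: for every pair of probability measures μ₀, μ₁ absolutely continuous with respect to m there exists a constant-speed W₂-geodesic (μ_t)_{t∈[0,1]} from μ₀ to μ₁ with Ent(μ_t) ≤ (1−t)·Ent(μ₀) + t·Ent(μ₁) − (K/2)·t·(1−t)·W₂(μ₀,μ₁)² for every t ∈ [0,1]. -/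

import Mathlib

open MeasureTheory

-- relative entropy with values in `EReal` (`+∞` if not absolutely continuous or not integrable)
open Classical in
noncomputable def Ent {α : Type*} [MeasurableSpace α] (m μ : Measure α) : EReal :=
  if μ ≪ m ∧ Integrable (llr μ m) μ then ((∫ z, llr μ m z ∂μ : ℝ) : EReal) else ⊤

-- squared 2-Wasserstein distance, as an infimum over couplings
noncomputable def W2sq {α : Type*} [MeasurableSpace α] (d : α → α → ℝ)
    (μ ν : Measure α) : ENNReal :=
  ⨅ (π : Measure (α × α)) (_ : Measure.map Prod.fst π = μ ∧ Measure.map Prod.snd π = ν),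
    ∫⁻ p, ENNReal.ofReal (d p.1 p.2 ^ 2) ∂π

open Filter Topology ProbabilityTheory

lemma aux_W2sq_le {Y : Type*} [MetricSpace Y] [MeasurableSpace Y] (μ ν : Measure Y)
    (π : Measure (Y × Y)) (h1 : π.map Prod.fst = μ) (h2 : π.map Prod.snd = ν) :
    W2sq dist μ ν ≤ ∫⁻ p, ENNReal.ofReal (dist p.1 p.2 ^ 2) ∂π :=
  iInf₂_le π ⟨h1, h2⟩

lemma aux_W2sq_symm {Y : Type*} [MetricSpace Y] [CompactSpace Y]
    [MeasurableSpace Y] [BorelSpace Y] (μ ν : Measure Y) :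
    W2sq dist μ ν = W2sq dist ν μ := by
  have key : ∀ μ ν : Measure Y, W2sq dist μ ν ≤ W2sq dist ν μ := by
    intro μ ν
    conv_rhs => unfold W2sq
    refine le_iInf₂ fun π hπ => ?_
    refine (aux_W2sq_le _ _ (π.map Prod.swap) ?_ ?_).trans ?_
    · rw [Measure.map_map measurable_fst measurable_swap]; exact hπ.2
    · rw [Measure.map_map measurable_snd measurable_swap]; exact hπ.1
    · rw [lintegral_map (by fun_prop) measurable_swap]
      simp [dist_comm]
  exact le_antisymm (key _ _) (key _ _)

lemma aux_W2sq_lt_top {Y : Type*} [MetricSpace Y] [CompactSpace Y]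
    [MeasurableSpace Y] [BorelSpace Y] (μ ν : Measure Y) [IsProbabilityMeasure μ]
    [IsProbabilityMeasure ν] : W2sq dist μ ν < ⊤ := by
  refine (aux_W2sq_le _ _ (μ.prod ν) ?_ ?_).trans_lt ?_
  · simp
  · simp
  · have : ∀ p : Y × Y, ENNReal.ofReal (dist p.1 p.2 ^ 2)
        ≤ ENNReal.ofReal (Metric.diam (Set.univ : Set Y) ^ 2) := by
      intro p
      apply ENNReal.ofReal_le_ofReal
      have := Metric.dist_le_diam_of_mem (isCompact_univ (X := Y)).isBounded
        (Set.mem_univ p.1) (Set.mem_univ p.2)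
      gcongr
    refine (lintegral_mono this).trans_lt ?_
    simp

lemma aux_W2sq_self {Y : Type*} [MetricSpace Y] [CompactSpace Y]
    [MeasurableSpace Y] [BorelSpace Y] (μ : Measure Y) : W2sq dist μ μ = 0 := by
  refine le_antisymm ((aux_W2sq_le _ _ (μ.map (fun x => (x, x))) ?_ ?_).trans ?_) zero_le
  · rw [Measure.map_map measurable_fst (by fun_prop)]; exact Measure.map_id
  · rw [Measure.map_map measurable_snd (by fun_prop)]; exact Measure.map_id
  · rw [lintegral_map (by fun_prop) (by fun_prop)]
    simp

lemma aux_glue {Y : Type*} [MetricSpace Y] [CompactSpace Y]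
    [MeasurableSpace Y] [BorelSpace Y] (π₁ π₂ : Measure (Y × Y)) [IsProbabilityMeasure π₁]
    [IsProbabilityMeasure π₂] (h : π₁.map Prod.snd = π₂.map Prod.fst) :
    ∃ γ : Measure ((Y × Y) × Y), γ.map Prod.fst = π₁ ∧ γ.map (fun p => (p.1.2, p.2)) = π₂ := by
  have : Nonempty (Y × Y) := nonempty_of_isProbabilityMeasure π₁
  have : Nonempty Y := this.map Prod.fst
  refine ⟨π₁ ⊗ₘ (π₂.condKernel.comap Prod.snd measurable_snd), Measure.fst_compProd _ _, ?_⟩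
  conv_rhs => rw [← π₂.disintegrate π₂.condKernel, Measure.fst, ← h]
  ext s hs
  rw [Measure.map_apply (by fun_prop) hs, Measure.compProd_apply hs,
    Measure.compProd_apply (hs.preimage (by fun_prop)),
    lintegral_map (Kernel.measurable_kernel_prodMk_left hs) measurable_snd]
  rfl

/-- The 2-Wasserstein distance. -/
noncomputable def auxW {Y : Type*} [MetricSpace Y] [MeasurableSpace Y] (μ ν : Measure Y) : ENNReal :=
  (W2sq dist μ ν) ^ (1 / 2 : ℝ)

lemma aux_exists_coupling {Y : Type*} [MetricSpace Y] [MeasurableSpace Y] (μ ν : Measure Y)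
    (c : ENNReal) (h : W2sq dist μ ν < c) : ∃ π : Measure (Y × Y),
      Measure.map Prod.fst π = μ ∧ Measure.map Prod.snd π = ν ∧
      ∫⁻ p, ENNReal.ofReal (dist p.1 p.2 ^ 2) ∂π < c := by
  unfold W2sq at h
  simp only [iInf_lt_iff] at h
  obtain ⟨π, h1, h2⟩ := h
  exact ⟨π, h1.1, h1.2, h2⟩

lemma aux_prob {Y Z : Type*} [MeasurableSpace Y] [MeasurableSpace Z] (π : Measure Z) (μ : Measure Y)
    [IsProbabilityMeasure μ] (f : Z → Y) (hf : Measurable f) (h : π.map f = μ) :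
    IsProbabilityMeasure π := by
  constructor
  have : μ Set.univ = 1 := measure_univ
  rw [← h, Measure.map_apply hf MeasurableSet.univ] at this
  simpa using this

lemma aux_tri {Y : Type*} [MetricSpace Y] [CompactSpace Y]
    [MeasurableSpace Y] [BorelSpace Y] (μ ν σ : Measure Y) [IsProbabilityMeasure μ]
    [IsProbabilityMeasure ν] [IsProbabilityMeasure σ] :
    auxW μ σ ≤ auxW μ ν + auxW ν σ := by
  have hcoup : ∀ π₁ π₂ : Measure (Y × Y), π₁.map Prod.fst = μ → π₁.map Prod.snd = ν →
      π₂.map Prod.fst = ν → π₂.map Prod.snd = σ →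
      auxW μ σ ≤ (∫⁻ p, ENNReal.ofReal (dist p.1 p.2 ^ 2) ∂π₁) ^ (1 / 2 : ℝ) +
        (∫⁻ p, ENNReal.ofReal (dist p.1 p.2 ^ 2) ∂π₂) ^ (1 / 2 : ℝ) := by
    intro π₁ π₂ h1 h2 h3 h4
    have := aux_prob π₁ μ _ measurable_fst h1
    have := aux_prob π₂ ν _ measurable_fst h3
    obtain ⟨γ, hγ1, hγ2⟩ := aux_glue π₁ π₂ (h2.trans h3.symm)
    have hle : W2sq dist μ σ ≤ ∫⁻ p, ENNReal.ofReal (dist p.1.1 p.2 ^ 2) ∂γ := by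
      refine (aux_W2sq_le _ _ (γ.map (fun p => (p.1.1, p.2))) ?_ ?_).trans ?_
      · rw [Measure.map_map measurable_fst (by fun_prop), ← h1, ← hγ1,
          Measure.map_map measurable_fst (by fun_prop)]; rfl
      · rw [Measure.map_map measurable_snd (by fun_prop), ← h4, ← hγ2,
          Measure.map_map measurable_snd (by fun_prop)]; rfl
      · rw [lintegral_map (by fun_prop) (by fun_prop)]
    rw [← hγ1, ← hγ2, lintegral_map (by fun_prop) (by fun_prop),
      lintegral_map (by fun_prop) (by fun_prop)]
    have hM := ENNReal.lintegral_Lp_add_le (μ := γ) (p := 2)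
      (f := fun p => ENNReal.ofReal (dist p.1.1 p.1.2))
      (g := fun p => ENNReal.ofReal (dist p.1.2 p.2)) (by fun_prop) (by fun_prop) (by norm_num)
    have e : ∀ x : ℝ, 0 ≤ x → ENNReal.ofReal (x ^ 2) = ENNReal.ofReal x ^ (2 : ℝ) := by
      intro x hx
      rw [ENNReal.ofReal_rpow_of_nonneg hx (by norm_num)]; norm_num
    simp only [e _ dist_nonneg] at hle ⊢
    refine le_trans ?_ hM
    unfold auxW
    refine ENNReal.rpow_le_rpow (hle.trans (lintegral_mono fun p => ?_)) (by norm_num)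
    refine ENNReal.rpow_le_rpow ?_ (by norm_num)
    simp only [Pi.add_apply]
    rw [← ENNReal.ofReal_add dist_nonneg dist_nonneg]
    exact ENNReal.ofReal_le_ofReal (dist_triangle _ _ _)
  have hpos : ∀ a : ENNReal, a ≠ ⊤ → Tendsto (fun e : ENNReal => (a + e) ^ (1 / 2 : ℝ)) (𝓝[>] 0)
      (𝓝 (a ^ (1 / 2 : ℝ))) := by
    intro a ha
    have : Continuous (fun e : ENNReal => (a + e) ^ (1 / 2 : ℝ)) := by fun_prop
    have := (this.tendsto 0).mono_left (nhdsWithin_le_nhds (s := Set.Ioi 0))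
    simpa using this
  have hT := (hpos _ (aux_W2sq_lt_top μ ν).ne).add (hpos _ (aux_W2sq_lt_top ν σ).ne)
  refine ge_of_tendsto hT ?_
  filter_upwards [self_mem_nhdsWithin] with e he
  obtain ⟨π₁, a1, a2, a3⟩ := aux_exists_coupling μ ν (W2sq dist μ ν + e)
    (ENNReal.lt_add_right (aux_W2sq_lt_top μ ν).ne (ne_of_gt he))
  obtain ⟨π₂, b1, b2, b3⟩ := aux_exists_coupling ν σ (W2sq dist ν σ + e)
    (ENNReal.lt_add_right (aux_W2sq_lt_top ν σ).ne (ne_of_gt he))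
  refine (hcoup π₁ π₂ a1 a2 b1 b2).trans ?_
  gcongr

lemma aux_W_lsc {Y : Type*} [MetricSpace Y] [CompactSpace Y]
    [MeasurableSpace Y] [BorelSpace Y] (F : Ultrafilter ℕ)
    (μ ν : ℕ → ProbabilityMeasure Y) (μ' ν' : ProbabilityMeasure Y)
    (hμ : Tendsto μ F (𝓝 μ')) (hν : Tendsto ν F (𝓝 ν')) (c : ℕ → ENNReal) (c' : ENNReal)
    (hc : Tendsto c F (𝓝 c')) (h : ∀ n, W2sq dist (μ n : Measure Y) (ν n) ≤ c n) :
    W2sq dist (μ' : Measure Y) ν' ≤ c' := by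
  refine ENNReal.le_of_forall_pos_le_add fun ε hε _ => ?_
  have hex : ∀ n, ∃ π : ProbabilityMeasure (Y × Y), Measure.map Prod.fst (π : Measure (Y × Y)) = μ n ∧
      Measure.map Prod.snd (π : Measure (Y × Y)) = ν n ∧
      ∫⁻ p, ENNReal.ofReal (dist p.1 p.2 ^ 2) ∂(π : Measure (Y × Y)) ≤ c n + ε := by
    intro n
    obtain ⟨π, a1, a2, a3⟩ := aux_exists_coupling (μ n : Measure Y) (ν n) (W2sq dist (μ n : Measure Y) (ν n) + ε)
      (ENNReal.lt_add_right (aux_W2sq_lt_top _ _).ne (by simpa using hε.ne'))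
    refine ⟨⟨π, aux_prob π (μ n : Measure Y) _ measurable_fst a1⟩, a1, a2, a3.le.trans ?_⟩
    gcongr
    exact h n
  choose π h1 h2 h3 using hex
  obtain ⟨π', -, hπ'⟩ := isCompact_univ.ultrafilter_le_nhds (F.map π) (by simp)
  have hπ : Tendsto π F (𝓝 π') := hπ'
  have m1 := ProbabilityMeasure.tendsto_map_of_tendsto_of_continuous π π' hπ continuous_fst
  have m2 := ProbabilityMeasure.tendsto_map_of_tendsto_of_continuous π π' hπ continuous_snd
  have e1 : ∀ n, (π n).map continuous_fst.measurable.aemeasurable = μ n := fun n =>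
    Subtype.ext (h1 n)
  have e2 : ∀ n, (π n).map continuous_snd.measurable.aemeasurable = ν n := fun n =>
    Subtype.ext (h2 n)
  simp only [e1] at m1
  simp only [e2] at m2
  have f1 := tendsto_nhds_unique m1 hμ
  have f2 := tendsto_nhds_unique m2 hν
  let g : BoundedContinuousFunction (Y × Y) NNReal :=
    BoundedContinuousFunction.mkOfCompact ⟨fun p => Real.toNNReal (dist p.1 p.2 ^ 2), by fun_prop⟩
  have hl := (ProbabilityMeasure.tendsto_iff_forall_lintegral_tendsto.1 hπ) g
  have hl' : ∫⁻ p, ENNReal.ofReal (dist p.1 p.2 ^ 2) ∂(π' : Measure (Y × Y)) ≤ c' + ε :=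
    le_of_tendsto_of_tendsto' hl (hc.add tendsto_const_nhds) h3
  refine le_trans ?_ hl'
  unfold W2sq
  exact iInf₂_le (π' : Measure (Y × Y)) ⟨congrArg Subtype.val f1, congrArg Subtype.val f2⟩

lemma aux_legendre {Y : Type*} [MeasurableSpace Y] (m μ : Measure Y) [IsFiniteMeasure m]
    [IsProbabilityMeasure μ] (hac : μ ≪ m) (hllr : Integrable (llr μ m) μ) (φ : Y → ℝ)
    (hφ : Measurable φ) (M : ℝ) (hM : ∀ x, |φ x| ≤ M) :
    ∫ x, φ x ∂μ ≤ ∫ x, llr μ m x ∂μ - 1 + ∫ x, Real.exp (φ x) ∂m := by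
  have hφi : Integrable φ μ := Integrable.of_bound hφ.aestronglyMeasurable M (ae_of_all _ hM)
  have hei : Integrable (fun x => Real.exp (φ x)) m := by
    refine Integrable.of_bound (by fun_prop) (Real.exp M) (ae_of_all _ fun x => ?_)
    rw [Real.norm_eq_abs, abs_of_pos (Real.exp_pos _)]
    exact Real.exp_le_exp.2 ((le_abs_self _).trans (hM x))
  have hle := Measure.withDensity_rnDeriv_le m μ
  have hei' : Integrable (fun x => Real.exp (φ x)) (μ.withDensity (m.rnDeriv μ)) :=
    hei.mono_measure hle
  have h1 : ∫ x, (m.rnDeriv μ x).toReal * Real.exp (φ x) ∂μ ≤ ∫ x, Real.exp (φ x) ∂m := by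
    have := integral_withDensity_eq_integral_toReal_smul (μ := μ) (Measure.measurable_rnDeriv m μ)
      (Measure.rnDeriv_lt_top m μ) (fun x => Real.exp (φ x))
    simp only [smul_eq_mul] at this
    rw [← this]
    exact integral_mono_measure hle (ae_of_all _ fun x => (Real.exp_pos _).le) hei
  have hi2 : Integrable (fun x => (m.rnDeriv μ x).toReal * Real.exp (φ x)) μ :=
    (integrable_withDensity_iff_integrable_smul' (Measure.measurable_rnDeriv m μ)
      (Measure.rnDeriv_lt_top m μ)).1 hei'
  have h2 : ∫ x, φ x ∂μ ≤ ∫ x, (llr μ m x - 1 + (m.rnDeriv μ x).toReal * Real.exp (φ x)) ∂μ := by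
    refine integral_mono_ae hφi ((hllr.sub (integrable_const 1)).add hi2) ?_
    filter_upwards [exp_neg_llr hac] with x hx
    rw [← hx, ← Real.exp_add]
    have := Real.add_one_le_exp (-llr μ m x + φ x)
    linarith
  have hi3 : Integrable (fun x => llr μ m x - 1) μ := hllr.sub (integrable_const 1)
  rw [integral_add hi3 hi2, integral_sub hllr (integrable_const 1)] at h2
  simp at h2
  linarith

lemma aux_fatou {Y : Type*} [MeasurableSpace Y] (μ : Measure Y) (f : ℕ → Y → ℝ) (g : Y → ℝ)
    (hf : ∀ n, Integrable (f n) μ) (hg : Measurable g) (h0 : ∀ n, 0 ≤ᵐ[μ] f n)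
    (hlim : ∀ᵐ x ∂μ, Tendsto (fun n => f n x) atTop (𝓝 (g x)))
    (c : ℕ → ℝ) (c' : ℝ) (hc : Tendsto c atTop (𝓝 c')) (hle : ∀ n, ∫ x, f n x ∂μ ≤ c n) :
    Integrable g μ ∧ ∫ x, g x ∂μ ≤ c' := by
  have hg0 : 0 ≤ᵐ[μ] g := by
    filter_upwards [hlim, ae_all_iff.2 h0] with x hx h
    exact ge_of_tendsto' hx h
  have hc0 : 0 ≤ c' := ge_of_tendsto' hc fun n => (integral_nonneg_of_ae (h0 n)).trans (hle n)
  have key : ∫⁻ x, ENNReal.ofReal (g x) ∂μ ≤ ENNReal.ofReal c' := by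
    calc ∫⁻ x, ENNReal.ofReal (g x) ∂μ
        = ∫⁻ x, liminf (fun n => ENNReal.ofReal (f n x)) atTop ∂μ := by
          refine lintegral_congr_ae ?_
          filter_upwards [hlim] with x hx
          exact ((ENNReal.continuous_ofReal.tendsto _).comp hx).liminf_eq.symm
      _ ≤ liminf (fun n => ∫⁻ x, ENNReal.ofReal (f n x) ∂μ) atTop :=
          lintegral_liminf_le' fun n => (hf n).aemeasurable.ennreal_ofReal
      _ ≤ liminf (fun n => ENNReal.ofReal (c n)) atTop := by
          refine liminf_le_liminf (Eventually.of_forall fun n => ?_)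
          rw [← ofReal_integral_eq_lintegral_ofReal (hf n) (h0 n)]
          exact ENNReal.ofReal_le_ofReal (hle n)
      _ = ENNReal.ofReal c' := ((ENNReal.continuous_ofReal.tendsto _).comp hc).liminf_eq
  have hgi : Integrable g μ := by
    refine ⟨hg.aestronglyMeasurable, ?_⟩
    rw [hasFiniteIntegral_iff_ofReal hg0]
    exact key.trans_lt ENNReal.ofReal_lt_top
  refine ⟨hgi, ?_⟩
  rw [← ofReal_integral_eq_lintegral_ofReal hgi hg0] at key
  exact (ENNReal.ofReal_le_ofReal_iff hc0).1 key

lemma aux_extend {Y : Type*} [MetricSpace Y] [CompactSpace Y]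
    [MeasurableSpace Y] [BorelSpace Y] (m μ : Measure Y) [IsFiniteMeasure m]
    [IsProbabilityMeasure μ] (C : ℝ)
    (h : ∀ g : C(Y, ℝ), ∫ x, g x ∂μ ≤ C - 1 + ∫ x, Real.exp (g x) ∂m)
    (φ : Y → ℝ) (hφ : Measurable φ) (M : ℝ) (hM : ∀ x, |φ x| ≤ M) :
    ∫ x, φ x ∂μ ≤ C - 1 + ∫ x, Real.exp (φ x) ∂m := by
  have hφi : Integrable φ (μ + m) := Integrable.of_bound hφ.aestronglyMeasurable M (ae_of_all _ hM)
  have hei : Integrable (fun x => Real.exp (φ x)) m := by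
    refine Integrable.of_bound (by fun_prop) (Real.exp M) (ae_of_all _ fun x => ?_)
    rw [Real.norm_eq_abs, abs_of_pos (Real.exp_pos _)]
    exact Real.exp_le_exp.2 ((le_abs_self _).trans (hM x))
  have hT : Tendsto (fun ε : ℝ => C - 1 + ∫ x, Real.exp (φ x) ∂m + (1 + Real.exp M) * ε) (𝓝[>] 0)
      (𝓝 (C - 1 + ∫ x, Real.exp (φ x) ∂m + (1 + Real.exp M) * 0)) :=
    (Continuous.tendsto (by fun_prop) 0).mono_left nhdsWithin_le_nhds
  rw [mul_zero, add_zero] at hT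
  refine ge_of_tendsto hT ?_
  filter_upwards [self_mem_nhdsWithin] with ε hε
  obtain ⟨g₀, hg₀, -⟩ := hφi.exists_boundedContinuous_integral_sub_le (ε := ε) hε
  let g : C(Y, ℝ) := ⟨fun x => min (g₀ x) M, by fun_prop⟩
  have hgint : ∀ κ : Measure Y, IsFiniteMeasure κ → Integrable g κ := fun κ _ =>
    (BoundedContinuousFunction.mkOfCompact g).integrable κ
  have hegint : Integrable (fun x => Real.exp (g x)) m :=
    (BoundedContinuousFunction.mkOfCompact
      (⟨fun x => Real.exp (g x), by fun_prop⟩ : C(Y, ℝ))).integrable m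
  have hsub : ∀ κ : Measure Y, IsFiniteMeasure κ → κ ≤ μ + m → ∫ x, |φ x - g x| ∂κ ≤ ε := by
    intro κ _ hκ
    have hitg0 : Integrable (fun x => |φ x - g x|) (μ + m) := (hφi.sub (hgint _ inferInstance)).abs
    have hitg1 : Integrable (fun x => ‖φ x - g₀ x‖) (μ + m) := (hφi.sub (g₀.integrable _)).norm
    calc ∫ x, |φ x - g x| ∂κ ≤ ∫ x, |φ x - g x| ∂(μ + m) :=
          integral_mono_measure hκ (ae_of_all _ fun x => abs_nonneg _) hitg0
      _ ≤ ∫ x, ‖φ x - g₀ x‖ ∂(μ + m) := by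
          refine integral_mono hitg0 hitg1 fun x => ?_
          have hx := (abs_le.1 (hM x)).2
          change |φ x - min (g₀ x) M| ≤ |φ x - g₀ x|
          rcases le_total (g₀ x) M with h' | h'
          · rw [min_eq_left h']
          · rw [min_eq_right h', abs_of_nonpos (by linarith), abs_of_nonpos (by linarith)]
            linarith
      _ ≤ ε := hg₀
  have s1 := hsub μ inferInstance (Measure.le_add_right le_rfl)
  have s2 := hsub m inferInstance (Measure.le_add_left le_rfl)
  have hφμ : Integrable φ μ := hφi.mono_measure (Measure.le_add_right le_rfl)
  have hφm : Integrable φ m := hφi.mono_measure (Measure.le_add_left le_rfl)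
  have d1 : ∫ x, φ x ∂μ ≤ ∫ x, (g x + |φ x - g x|) ∂μ :=
    integral_mono hφμ ((hgint μ inferInstance).add (hφμ.sub (hgint μ inferInstance)).abs)
      fun x => by have := le_abs_self (φ x - g x); simp only; linarith
  have haμ : Integrable (fun x => |φ x - g x|) μ := (hφμ.sub (hgint μ inferInstance)).abs
  rw [integral_add (hgint μ inferInstance) haμ] at d1
  have hai : Integrable (fun x => |φ x - g x|) m := (hφm.sub (hgint m inferInstance)).abs
  have d2 : ∫ x, Real.exp (g x) ∂m ≤ ∫ x, (Real.exp (φ x) + Real.exp M * |φ x - g x|) ∂m := by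
    refine integral_mono hegint (hei.add (hai.const_mul _)) fun x => ?_
    have e1 := Real.add_one_le_exp (φ x - g x)
    have e2 : Real.exp (φ x) = Real.exp (g x) * Real.exp (φ x - g x) := by
      rw [← Real.exp_add]; ring_nf
    have e3 : Real.exp (g x) ≤ Real.exp M := Real.exp_le_exp.2 (min_le_right _ _)
    have e4 := neg_abs_le (φ x - g x)
    have e5 := Real.exp_pos (g x)
    have e6 := abs_nonneg (φ x - g x)
    simp only
    nlinarith
  rw [integral_add hei (hai.const_mul _), integral_const_mul] at d2
  have := h g
  have e7 := Real.exp_pos M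
  nlinarith

lemma aux_ac {Y : Type*} [MeasurableSpace Y] (m μ : Measure Y) [IsFiniteMeasure m]
    [IsProbabilityMeasure μ] (C : ℝ)
    (h : ∀ φ : Y → ℝ, Measurable φ → ∀ M : ℝ, (∀ x, |φ x| ≤ M) →
      ∫ x, φ x ∂μ ≤ C - 1 + ∫ x, Real.exp (φ x) ∂m) : μ ≪ m := by
  refine Measure.AbsolutelyContinuous.mk fun s hs hms => ?_
  have key : ∀ L : ℝ, 0 ≤ L → L * μ.real s ≤ C - 1 + m.real Set.univ := by
    intro L hL
    have := h (s.indicator fun _ => L) (measurable_const.indicator hs) L (fun x => by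
      by_cases hx : x ∈ s <;> simp [hx, hL, abs_of_nonneg])
    have e : ∫ x, Real.exp (s.indicator (fun _ => L) x) ∂m = m.real Set.univ := by
      rw [integral_congr_ae (g := fun _ => (1 : ℝ))]
      · simp
      · have : ∀ᵐ x ∂m, x ∉ s := measure_eq_zero_iff_ae_notMem.1 hms
        filter_upwards [this] with x hx
        simp [hx]
    rw [e, integral_indicator_const _ hs] at this
    simpa [mul_comm] using this
  by_contra hne
  have hpos : 0 < μ.real s := by
    rw [Measure.real]; exact ENNReal.toReal_pos hne (measure_ne_top _ _)
  have h0 := key 0 le_rfl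
  have h1 := key ((C - 1 + m.real Set.univ + 1) / μ.real s) (by
    apply div_nonneg _ hpos.le; linarith)
  rw [div_mul_cancel₀ _ hpos.ne'] at h1
  linarith

lemma aux_clamp (r n : ℝ) (hr : 0 < r) :
    0 ≤ Real.log (max (Real.exp (-n)) (min r (Real.exp n))) + (r⁻¹ + Real.exp (-n) - 1) := by
  set w := max (Real.exp (-n)) (min r (Real.exp n)) with hw
  have hw0 : 0 < w := lt_max_of_lt_left (Real.exp_pos _)
  have h1 := Real.add_one_le_exp (-Real.log w)
  rw [Real.exp_neg, Real.exp_log hw0] at h1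
  have h2 : w⁻¹ ≤ r⁻¹ + Real.exp (-n) := by
    have hrp := inv_pos.2 hr
    have hep := Real.exp_pos (-n)
    rcases le_total r (Real.exp n) with h | h
    · have : w⁻¹ ≤ r⁻¹ := inv_anti₀ hr (by rw [hw, min_eq_left h]; exact le_max_right _ _)
      linarith
    · have : w⁻¹ ≤ (Real.exp n)⁻¹ :=
        inv_anti₀ (Real.exp_pos _) (by rw [hw, min_eq_right h]; exact le_max_right _ _)
      rw [← Real.exp_neg] at this
      linarith
  linarith

lemma aux_clamp_abs (r n : ℝ) (hn : 0 ≤ n) :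
    |Real.log (max (Real.exp (-n)) (min r (Real.exp n)))| ≤ n := by
  have hw0 : 0 < max (Real.exp (-n)) (min r (Real.exp n)) := lt_max_of_lt_left (Real.exp_pos _)
  rw [abs_le]
  constructor
  · rw [Real.le_log_iff_exp_le hw0]; exact le_max_left _ _
  · rw [Real.log_le_iff_le_exp hw0]
    exact max_le (Real.exp_le_exp.2 (by linarith)) (min_le_right _ _)

lemma aux_clamp_lim (r : ℝ) (hr : 0 < r) :
    Tendsto (fun n : ℕ => Real.log (max (Real.exp (-(n : ℝ))) (min r (Real.exp n)))) atTop
      (𝓝 (Real.log r)) := by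
  have t1 : Tendsto (fun n : ℕ => Real.exp (-(n : ℝ))) atTop (𝓝 0) :=
    Real.tendsto_exp_neg_atTop_nhds_zero.comp tendsto_natCast_atTop_atTop
  have t2 : Tendsto (fun n : ℕ => Real.exp (n : ℝ)) atTop atTop :=
    Real.tendsto_exp_atTop.comp tendsto_natCast_atTop_atTop
  refine tendsto_const_nhds.congr' ?_
  filter_upwards [t1.eventually_lt_const hr, t2.eventually_ge_atTop r] with n h1 h2
  rw [min_eq_left h2, max_eq_right h1.le]

lemma aux_ent_of_dual {Y : Type*} [MeasurableSpace Y] (m μ : Measure Y) [IsFiniteMeasure m]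
    [IsProbabilityMeasure μ] (C : ℝ)
    (h : ∀ φ : Y → ℝ, Measurable φ → ∀ M : ℝ, (∀ x, |φ x| ≤ M) →
      ∫ x, φ x ∂μ ≤ C - 1 + ∫ x, Real.exp (φ x) ∂m) : Ent m μ ≤ (C : EReal) := by
  have hac := aux_ac m μ C h
  let r : Y → ℝ := fun x => (μ.rnDeriv m x).toReal
  have hrm : Measurable r := (Measure.measurable_rnDeriv μ m).ennreal_toReal
  have hri : Integrable r m := Measure.integrable_toReal_rnDeriv
  have hr1 : ∫ x, r x ∂m = 1 := by
    have := Measure.integral_toReal_rnDeriv hac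
    simpa [r] using this
  have hrpos : ∀ᵐ x ∂μ, 0 < r x := by
    filter_upwards [Measure.rnDeriv_pos hac, hac.ae_le (Measure.rnDeriv_lt_top μ m)] with x h1 h2
    exact ENNReal.toReal_pos h1.ne' h2.ne
  have hinv : Integrable (fun x => (r x)⁻¹) μ := by
    have : Integrable (fun x => (m.rnDeriv μ x).toReal) μ := Measure.integrable_toReal_rnDeriv
    refine this.congr ?_
    filter_upwards [exp_neg_llr hac, hrpos] with x hx hp
    rw [← hx, Real.exp_neg, llr, Real.exp_log hp]
  let φ : ℕ → Y → ℝ := fun n x => Real.log (max (Real.exp (-(n : ℝ))) (min (r x) (Real.exp n)))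
  have hφm : ∀ n, Measurable (φ n) := fun n => by fun_prop
  have hφb : ∀ n x, |φ n x| ≤ n := fun n x => aux_clamp_abs _ _ n.cast_nonneg
  have hφi : ∀ n, Integrable (φ n) μ := fun n =>
    Integrable.of_bound (hφm n).aestronglyMeasurable n (ae_of_all _ (hφb n))
  have hφle : ∀ n : ℕ, ∫ x, φ n x ∂μ ≤ C + Real.exp (-(n : ℝ)) * m.real Set.univ := by
    intro n
    have h1 := h (φ n) (hφm n) n (hφb n)
    have h2 : ∫ x, Real.exp (φ n x) ∂m ≤ ∫ x, (r x + Real.exp (-(n : ℝ))) ∂m := by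
      refine integral_mono_of_nonneg (ae_of_all _ fun x => (Real.exp_pos _).le)
        (hri.add (integrable_const _)) (ae_of_all _ fun x => ?_)
      simp only [φ]
      rw [Real.exp_log (lt_max_of_lt_left (Real.exp_pos _))]
      have : 0 ≤ r x := ENNReal.toReal_nonneg
      have := Real.exp_pos (-(n : ℝ))
      exact max_le (by linarith) ((min_le_left _ _).trans (by linarith))
    rw [integral_add hri (integrable_const _), hr1] at h2
    simp at h2
    linarith
  have t1 : Tendsto (fun n : ℕ => Real.exp (-(n : ℝ))) atTop (𝓝 0) :=
    Real.tendsto_exp_neg_atTop_nhds_zero.comp tendsto_natCast_atTop_atTop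
  set I := ∫ x, (r x)⁻¹ ∂μ with hI
  have hai : ∀ n : ℕ, Integrable (fun x => (r x)⁻¹ + Real.exp (-(n : ℝ)) - 1) μ := fun n =>
    (hinv.add (integrable_const _)).sub (integrable_const _)
  obtain ⟨hF1, hF2⟩ := aux_fatou μ (fun n x => φ n x + ((r x)⁻¹ + Real.exp (-(n : ℝ)) - 1))
    (fun x => Real.log (r x) + ((r x)⁻¹ + 0 - 1)) (fun n => (hφi n).add (hai n)) (by fun_prop)
    (fun n => by
      filter_upwards [hrpos] with x hx
      exact aux_clamp (r x) n hx)
    (by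
      filter_upwards [hrpos] with x hx
      exact (aux_clamp_lim (r x) hx).add ((tendsto_const_nhds.add t1).sub_const 1))
    (fun n => C + Real.exp (-(n : ℝ)) * m.real Set.univ + (I + Real.exp (-(n : ℝ)) - 1))
    (C + 0 * m.real Set.univ + (I + 0 - 1))
    (((t1.mul_const _).const_add C).add ((t1.const_add I).sub_const 1))
    (fun n => by
      rw [integral_add (hφi n) (hai n), integral_sub (f := fun x => (r x)⁻¹ + Real.exp (-(n : ℝ)))
        (hinv.add (integrable_const _)) (integrable_const _),
        integral_add hinv (integrable_const _)]
      have := hφle n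
      simp
      linarith)
  have hl : Integrable (llr μ m) μ := by
    have := hF1.sub (hinv.sub (integrable_const (1 : ℝ)))
    refine this.congr (ae_of_all _ fun x => ?_)
    simp [llr, r]
  have e : ∫ x, (Real.log (r x) + ((r x)⁻¹ + 0 - 1)) ∂μ = ∫ x, llr μ m x ∂μ + (I - 1) := by
    have e1 := integral_add hl (hinv.sub (integrable_const (1 : ℝ)))
    simp only [Pi.sub_apply] at e1
    rw [integral_sub hinv (integrable_const _)] at e1
    simp at e1
    rw [← e1]
    simp [llr, r]
  rw [e] at hF2
  unfold Ent
  rw [if_pos ⟨hac, hl⟩]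
  exact EReal.coe_le_coe_iff.2 (by linarith)

lemma aux_ent_lsc {Y : Type*} [MetricSpace Y] [CompactSpace Y]
    [MeasurableSpace Y] [BorelSpace Y] (m : Measure Y) [IsFiniteMeasure m] (F : Ultrafilter ℕ)
    (μ : ℕ → ProbabilityMeasure Y) (μ' : ProbabilityMeasure Y)
    (hμ : Tendsto μ F (𝓝 μ')) (c : ℕ → ℝ) (c' : ℝ)
    (hc : Tendsto c F (𝓝 c')) (h : ∀ n, Ent m (μ n : Measure Y) ≤ (c n : EReal)) :
    Ent m (μ' : Measure Y) ≤ (c' : EReal) := by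
  refine aux_ent_of_dual m _ c' (aux_extend m _ c' fun g => ?_)
  have h1 := (ProbabilityMeasure.tendsto_iff_forall_integral_tendsto.1 hμ)
    (BoundedContinuousFunction.mkOfCompact g)
  refine le_of_tendsto_of_tendsto' h1 ((hc.sub_const 1).add_const _) fun n => ?_
  have hn := h n
  unfold Ent at hn
  split_ifs at hn with hh
  · have := EReal.coe_le_coe_iff.1 hn
    have := aux_legendre m (μ n : Measure Y) hh.1 hh.2 g g.continuous.measurable ‖g‖
      (fun x => g.norm_coe_le_norm x)
    simp only [BoundedContinuousFunction.mkOfCompact_apply]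
    linarith
  · exact absurd hn (by simp)

/-- Real-valued 2-Wasserstein distance. -/
noncomputable def auxD {Y : Type*} [MetricSpace Y] [MeasurableSpace Y] (μ ν : Measure Y) : ℝ :=
  Real.sqrt (W2sq dist μ ν).toReal

lemma auxD_tri {Y : Type*} [MetricSpace Y] [CompactSpace Y]
    [MeasurableSpace Y] [BorelSpace Y] (μ ν σ : Measure Y) [IsProbabilityMeasure μ]
    [IsProbabilityMeasure ν] [IsProbabilityMeasure σ] :
    auxD μ σ ≤ auxD μ ν + auxD ν σ := by
  have e : ∀ a b : Measure Y, auxD a b = (auxW a b).toReal := by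
    intro a b
    rw [auxD, auxW, ← ENNReal.toReal_rpow, Real.sqrt_eq_rpow]
  have f : ∀ a b : Measure Y, IsProbabilityMeasure a → IsProbabilityMeasure b → auxW a b ≠ ⊤ := by
    intro a b _ _
    exact ENNReal.rpow_ne_top_of_nonneg (by norm_num) (aux_W2sq_lt_top a b).ne
  rw [e, e, e, ← ENNReal.toReal_add (f _ _ inferInstance inferInstance)
    (f _ _ inferInstance inferInstance)]
  exact ENNReal.toReal_mono (ENNReal.add_ne_top.2 ⟨f _ _ inferInstance inferInstance,
    f _ _ inferInstance inferInstance⟩) (aux_tri μ ν σ)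

lemma auxD_nonneg {Y : Type*} [MetricSpace Y] [MeasurableSpace Y] (μ ν : Measure Y) :
    0 ≤ auxD μ ν := Real.sqrt_nonneg _

lemma auxD_sq {Y : Type*} [MetricSpace Y] [MeasurableSpace Y] (μ ν : Measure Y) :
    auxD μ ν ^ 2 = (W2sq dist μ ν).toReal := Real.sq_sqrt ENNReal.toReal_nonneg

lemma auxD_W2sq {Y : Type*} [MetricSpace Y] [CompactSpace Y]
    [MeasurableSpace Y] [BorelSpace Y] (μ ν : Measure Y) [IsProbabilityMeasure μ]
    [IsProbabilityMeasure ν] : W2sq dist μ ν = ENNReal.ofReal (auxD μ ν ^ 2) := by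
  rw [auxD_sq, ENNReal.ofReal_toReal (aux_W2sq_lt_top μ ν).ne]

lemma aux_chain {Y : Type*} [MetricSpace Y] [CompactSpace Y]
    [MeasurableSpace Y] [BorelSpace Y]
    (m : Measure Y) [IsFiniteMeasure m] (K : ℝ)
    (hmid : ∀ μ₀ μ₁ : Measure Y, IsProbabilityMeasure μ₀ → IsProbabilityMeasure μ₁ →
      μ₀ ≪ m → μ₁ ≪ m →
      ∃ η : Measure Y, IsProbabilityMeasure η ∧ η ≪ m ∧
        W2sq dist μ₀ η = W2sq dist η μ₁ ∧
        W2sq dist μ₀ μ₁ = 4 * W2sq dist μ₀ η ∧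
        Ent m η ≤ ((1 / 2 : ℝ) : EReal) * Ent m μ₀ + ((1 / 2 : ℝ) : EReal) * Ent m μ₁ -
          (((K / 8) * (W2sq dist μ₀ μ₁).toReal : ℝ) : EReal)) (n : ℕ) :
    ∀ μ₀ μ₁ : Measure Y, IsProbabilityMeasure μ₀ → IsProbabilityMeasure μ₁ →
      μ₀ ≪ m → μ₁ ≪ m →
      ∃ ν : ℕ → Measure Y, (∀ k, IsProbabilityMeasure (ν k)) ∧ ν 0 = μ₀ ∧ ν (2 ^ n) = μ₁ ∧
        (∀ k < 2 ^ n, auxD (ν k) (ν (k + 1)) = auxD μ₀ μ₁ / 2 ^ n) ∧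
        ∀ e₀ e₁ : ℝ, Ent m μ₀ ≤ (e₀ : EReal) → Ent m μ₁ ≤ (e₁ : EReal) → ∀ k ≤ 2 ^ n,
          Ent m (ν k) ≤ (((1 - (k : ℝ) / 2 ^ n) * e₀ + (k : ℝ) / 2 ^ n * e₁ -
            K / 2 * ((k : ℝ) / 2 ^ n) * (1 - (k : ℝ) / 2 ^ n) * auxD μ₀ μ₁ ^ 2 : ℝ) : EReal) := by
  induction n with
  | zero =>
    intro μ₀ μ₁ h₀ h₁ a₀ a₁
    refine ⟨fun k => if k = 0 then μ₀ else μ₁, ?_, by simp, by simp, ?_, ?_⟩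
    · intro k; dsimp only; split_ifs <;> assumption
    · intro k hk
      have : k = 0 := by simpa using hk
      subst this; simp
    · intro e₀ e₁ he₀ he₁ k hk
      have : k = 0 ∨ k = 1 := by simp at hk; omega
      rcases this with rfl | rfl
      · simpa using he₀
      · simpa using he₁
  | succ n ih =>
    intro μ₀ μ₁ h₀ h₁ a₀ a₁
    obtain ⟨η, hη, aη, w1, w2, hE⟩ := hmid μ₀ μ₁ h₀ h₁ a₀ a₁
    have d1 : auxD η μ₁ = auxD μ₀ μ₁ / 2 := by
      rw [auxD, auxD, w2, ← w1, ENNReal.toReal_mul, Real.sqrt_mul (by simp)]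
      have : Real.sqrt (ENNReal.toReal 4) = 2 := by
        rw [show ENNReal.toReal 4 = 2 ^ 2 by norm_num]; exact Real.sqrt_sq (by norm_num)
      rw [this]; ring
    have d0 : auxD μ₀ η = auxD μ₀ μ₁ / 2 := by rw [← d1, auxD, auxD, w1]
    obtain ⟨a, pa, a0, aN, aw, ae⟩ := ih μ₀ η h₀ hη a₀ aη
    obtain ⟨b, pb, b0, bN, bw, be⟩ := ih η μ₁ hη h₁ aη a₁
    have hN : 0 < 2 ^ n := by positivity
    refine ⟨fun k => if k ≤ 2 ^ n then a k else b (k - 2 ^ n), ?_, by simp [a0], ?_, ?_, ?_⟩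
    · intro k; dsimp only
      split_ifs
      · exact pa _
      · exact pb _
    · have : ¬ (2 ^ (n + 1) ≤ 2 ^ n) := by rw [pow_succ]; omega
      have e : 2 ^ (n + 1) - 2 ^ n = 2 ^ n := by rw [pow_succ]; omega
      simp only [this, if_false, e, bN]
    · intro k hk
      rw [pow_succ] at hk
      have hd : auxD μ₀ μ₁ / 2 ^ (n + 1) = auxD μ₀ μ₁ / 2 / 2 ^ n := by rw [pow_succ]; field_simp
      rw [hd]; dsimp only
      rcases lt_trichotomy k (2 ^ n) with h | h | h
      · rw [if_pos h.le, if_pos (by omega), aw k h, d0]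
      · subst h
        rw [if_pos le_rfl, if_neg (by omega), aN, ← d1, ← bw 0 hN, b0]
        congr 2
        omega
      · rw [if_neg (by omega), if_neg (by omega), ← d1, ← bw (k - 2 ^ n) (by omega)]
        congr 2
        omega
    · intro e₀ e₁ he₀ he₁ k hk
      have hη' : Ent m η ≤ ((1 / 2 * e₀ + 1 / 2 * e₁ - K / 8 * auxD μ₀ μ₁ ^ 2 : ℝ) : EReal) := by
        refine hE.trans ?_
        rw [auxD_sq]
        push_cast
        refine EReal.sub_le_sub (add_le_add ?_ ?_) le_rfl
        · exact mul_le_mul_of_nonneg_left he₀ (by exact_mod_cast (by norm_num : (0 : ℝ) ≤ 1 / 2))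
        · exact mul_le_mul_of_nonneg_left he₁ (by exact_mod_cast (by norm_num : (0 : ℝ) ≤ 1 / 2))
      have hp : (2 : ℝ) ^ n ≠ 0 := by positivity
      by_cases h : k ≤ 2 ^ n
      · simp only [if_pos h]
        refine (ae _ _ he₀ hη' k h).trans (le_of_eq ?_)
        rw [EReal.coe_eq_coe_iff, d0, pow_succ]
        field_simp
        ring
      · simp only [if_neg h]
        refine (be _ _ hη' he₁ (k - 2 ^ n) (by rw [pow_succ] at hk; omega)).trans (le_of_eq ?_)
        rw [EReal.coe_eq_coe_iff, d1, pow_succ, Nat.cast_sub (by omega)]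
        push_cast
        field_simp
        ring

lemma aux_chain_dist {Y : Type*} [MetricSpace Y] [CompactSpace Y]
    [MeasurableSpace Y] [BorelSpace Y] (ν : ℕ → Measure Y) (hp : ∀ k, IsProbabilityMeasure (ν k))
    (N : ℕ) (c : ℝ) (h : ∀ k < N, auxD (ν k) (ν (k + 1)) = c) (j : ℕ) (i : ℕ) (hij : i + j ≤ N) :
    auxD (ν i) (ν (i + j)) ≤ j * c := by
  induction j with
  | zero => simp [auxD, aux_W2sq_self]
  | succ j ih =>
    have h1 := ih (by omega)
    have h2 := h (i + j) (by omega)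
    have h3 := auxD_tri (ν i) (ν (i + j)) (ν (i + j + 1))
    rw [← add_assoc]
    push_cast
    linarith

theorem stmt_17 {Y : Type*} [MetricSpace Y] [CompactSpace Y]
    [MeasurableSpace Y] [BorelSpace Y]
    (hgeo : ∀ p q : Y, ∃ γ : ℝ → Y, γ 0 = p ∧ γ 1 = q ∧
      ∀ s ∈ Set.Icc (0 : ℝ) 1, ∀ t ∈ Set.Icc (0 : ℝ) 1,
        dist (γ s) (γ t) = |t - s| * dist p q)
    (m : Measure Y) [IsFiniteMeasure m] (hm : m ≠ 0)
    (K : ℝ)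
    (hmid : ∀ μ₀ μ₁ : Measure Y, IsProbabilityMeasure μ₀ → IsProbabilityMeasure μ₁ →
      μ₀ ≪ m → μ₁ ≪ m →
      ∃ η : Measure Y, IsProbabilityMeasure η ∧ η ≪ m ∧
        W2sq dist μ₀ η = W2sq dist η μ₁ ∧
        W2sq dist μ₀ μ₁ = 4 * W2sq dist μ₀ η ∧
        Ent m η ≤ ((1 / 2 : ℝ) : EReal) * Ent m μ₀ + ((1 / 2 : ℝ) : EReal) * Ent m μ₁ -
          (((K / 8) * (W2sq dist μ₀ μ₁).toReal : ℝ) : EReal)) :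
    ∀ μ₀ μ₁ : Measure Y, IsProbabilityMeasure μ₀ → IsProbabilityMeasure μ₁ →
      μ₀ ≪ m → μ₁ ≪ m →
      ∃ μ : ℝ → Measure Y,
        μ 0 = μ₀ ∧ μ 1 = μ₁ ∧
        (∀ t ∈ Set.Icc (0 : ℝ) 1, IsProbabilityMeasure (μ t)) ∧
        (∀ s ∈ Set.Icc (0 : ℝ) 1, ∀ t ∈ Set.Icc (0 : ℝ) 1,
          W2sq dist (μ s) (μ t) = ENNReal.ofReal ((t - s) ^ 2) * W2sq dist μ₀ μ₁) ∧
        (∀ t ∈ Set.Icc (0 : ℝ) 1,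
          Ent m (μ t) ≤ ((1 - t : ℝ) : EReal) * Ent m μ₀ + ((t : ℝ) : EReal) * Ent m μ₁ -
            (((K / 2) * t * (1 - t) * (W2sq dist μ₀ μ₁).toReal : ℝ) : EReal)) := by

  intro μ₀ μ₁ h₀ h₁ a₀ a₁
  choose ν hp hν0 hν1 hνd hνe using fun n => aux_chain m K hmid n μ₀ μ₁ h₀ h₁ a₀ a₁
  let F : Ultrafilter ℕ := Filter.hyperfilter ℕ
  have hF : (F : Filter ℕ) ≤ atTop := Nat.hyperfilter_le_atTop
  let k : ℝ → ℕ → ℕ := fun t n => ⌊t * 2 ^ n⌋₊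
  let P : ℝ → ℕ → ProbabilityMeasure Y := fun t n => ⟨ν n (k t n), hp n _⟩
  have hex : ∀ t, ∃ p : ProbabilityMeasure Y, Tendsto (P t) F (𝓝 p) := by
    intro t
    obtain ⟨p, -, h⟩ := isCompact_univ.ultrafilter_le_nhds (F.map (P t)) (by simp)
    exact ⟨p, h⟩
  choose p hlim using hex
  have hk : ∀ t, 0 ≤ t → Tendsto (fun n => (k t n : ℝ) / 2 ^ n) F (𝓝 t) := by
    intro t ht
    have h1 := tendsto_nat_floor_mul_div_atTop (R := ℝ) ht
    have h2 : Tendsto (fun n : ℕ => (2 : ℝ) ^ n) atTop atTop :=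
      tendsto_pow_atTop_atTop_of_one_lt (by norm_num)
    exact (h1.comp h2).mono_left hF
  have hkle : ∀ t, t ≤ 1 → ∀ n, k t n ≤ 2 ^ n := by
    intro t ht n
    refine Nat.floor_le_of_le ?_
    push_cast
    exact mul_le_of_le_one_left (by positivity) ht
  have hp0 : (p 0 : Measure Y) = μ₀ := by
    have : P 0 = fun _ => ⟨μ₀, h₀⟩ := by
      funext n
      refine Subtype.ext ?_
      simp [P, k, hν0]
    have h2 := hlim 0
    rw [this] at h2
    have h3 : p 0 = (⟨μ₀, h₀⟩ : ProbabilityMeasure Y) :=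
      tendsto_nhds_unique h2 tendsto_const_nhds
    rw [h3]
    rfl
  have hp1 : (p 1 : Measure Y) = μ₁ := by
    have : P 1 = fun _ => ⟨μ₁, h₁⟩ := by
      funext n
      refine Subtype.ext ?_
      have : ⌊(1 : ℝ) * 2 ^ n⌋₊ = 2 ^ n := by
        rw [one_mul]; exact_mod_cast Nat.floor_natCast (R := ℝ) (2 ^ n)
      simp only [P, k, this, hν1]
    have h2 := hlim 1
    rw [this] at h2
    have h3 : p 1 = (⟨μ₁, h₁⟩ : ProbabilityMeasure Y) :=
      tendsto_nhds_unique h2 tendsto_const_nhds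
    rw [h3]
    rfl
  set D := auxD μ₀ μ₁ with hD
  have hD0 : 0 ≤ D := auxD_nonneg _ _
  have hup : ∀ s t : ℝ, 0 ≤ s → s ≤ t → t ≤ 1 →
      auxD (p s : Measure Y) (p t) ≤ (t - s) * D := by
    intro s t hs hst ht
    have hW : W2sq dist (p s : Measure Y) (p t) ≤ ENNReal.ofReal (((t - s) * D) ^ 2) := by
      refine aux_W_lsc F (P s) (P t) (p s) (p t) (hlim s) (hlim t)
        (fun n => ENNReal.ofReal ((((k t n : ℝ) / 2 ^ n - (k s n : ℝ) / 2 ^ n) * D) ^ 2)) _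
        ?_ ?_
      · exact (ENNReal.continuous_ofReal.tendsto _).comp
          ((((hk t (hs.trans hst)).sub (hk s hs)).mul_const D).pow 2)
      · intro n
        have hle : k s n ≤ k t n := Nat.floor_mono (by gcongr)
        obtain ⟨j, hj⟩ := Nat.exists_eq_add_of_le hle
        have h1 := aux_chain_dist (ν n) (hp n) (2 ^ n) _ (hνd n) j (k s n)
          (by rw [← hj]; exact hkle t ht n)
        rw [← hj] at h1
        have h2 : (k t n : ℝ) = k s n + j := by rw [hj]; push_cast; ring
        rw [auxD_W2sq]
        refine ENNReal.ofReal_le_ofReal (pow_le_pow_left₀ (auxD_nonneg _ _) ?_ 2)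
        refine h1.trans (le_of_eq ?_)
        rw [h2]
        ring
    rw [auxD_W2sq, ENNReal.ofReal_le_ofReal_iff (sq_nonneg _)] at hW
    exact (sq_le_sq₀ (auxD_nonneg _ _) (mul_nonneg (by linarith) hD0)).1 hW
  have heq : ∀ s t : ℝ, 0 ≤ s → s ≤ t → t ≤ 1 →
      W2sq dist (p s : Measure Y) (p t) = ENNReal.ofReal ((t - s) ^ 2) * W2sq dist μ₀ μ₁ := by
    intro s t hs hst ht
    have u1 := hup s t hs hst ht
    have u2 := hup 0 s le_rfl hs (hst.trans ht)
    have u3 := hup t 1 (hs.trans hst) ht le_rfl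
    have v1 := auxD_tri (p 0 : Measure Y) (p s) (p t)
    have v2 := auxD_tri (p 0 : Measure Y) (p t) (p 1)
    rw [hp0] at u2 v1 v2
    rw [hp1] at u3 v2
    have e : auxD (p s : Measure Y) (p t) = (t - s) * D := by
      refine le_antisymm u1 ?_
      rw [← hD] at v2
      linarith
    rw [auxD_W2sq, e, auxD_W2sq μ₀ μ₁, ← ENNReal.ofReal_mul (sq_nonneg _), mul_pow]
  refine ⟨fun t => p t, hp0, hp1, fun t _ => inferInstance, ?_, ?_⟩
  · intro s hs t ht
    rcases le_total s t with h | h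
    · exact heq s t hs.1 h ht.2
    · rw [aux_W2sq_symm, heq t s ht.1 h hs.2, ← neg_sub, neg_sq]
  · intro t ht
    have hbot : ∀ μ : Measure Y, Ent m μ ≠ ⊥ := by
      intro μ
      unfold Ent
      split_ifs <;> simp
    rcases eq_or_lt_of_le ht.1 with rfl | ht0
    · simp [hp0]
    rcases eq_or_lt_of_le ht.2 with rfl | ht1
    · simp [hp1]
    by_cases hE0 : Ent m μ₀ = ⊤
    · rw [hE0, EReal.coe_mul_top_of_pos (by linarith), EReal.top_add_of_ne_bot, EReal.top_sub_coe]
      · exact le_top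
      · intro hb
        rcases eq_or_ne (Ent m μ₁) ⊤ with hE1 | hE1
        · rw [hE1, EReal.coe_mul_top_of_pos ht0] at hb; simp at hb
        · lift Ent m μ₁ to ℝ using ⟨hE1, hbot _⟩ with e₁
          rw [← EReal.coe_mul] at hb; exact EReal.coe_ne_bot _ hb
    by_cases hE1 : Ent m μ₁ = ⊤
    · lift Ent m μ₀ to ℝ using ⟨hE0, hbot _⟩ with e₀
      rw [hE1, EReal.coe_mul_top_of_pos ht0, ← EReal.coe_mul, EReal.coe_add_top, EReal.top_sub_coe]
      exact le_top
    obtain ⟨e₀, he₀⟩ : ∃ e₀ : ℝ, (e₀ : EReal) = Ent m μ₀ :=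
      ⟨_, EReal.coe_toReal hE0 (hbot _)⟩
    obtain ⟨e₁, he₁⟩ : ∃ e₁ : ℝ, (e₁ : EReal) = Ent m μ₁ :=
      ⟨_, EReal.coe_toReal hE1 (hbot _)⟩
    have := aux_ent_lsc m F (P t) (p t) (hlim t) _ _
      ((((hk t ht.1).const_sub 1).mul_const e₀).add ((hk t ht.1).mul_const e₁) |>.sub
        ((((hk t ht.1).const_mul (K / 2)).mul ((hk t ht.1).const_sub 1)).mul_const (D ^ 2)))
      (fun n => hνe n e₀ e₁ he₀.ge he₁.ge (k t n) (hkle t ht.2 n))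
    rw [← he₀, ← he₁, ← auxD_sq]
    exact_mod_cast this
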